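/- For every rational α ∈ (0,1/2) and every v ∈ (0,1), there exists an explicit constant C₁(v,α) > 0 such that liminf_{β→∞} liminf_{N→∞} β · E[ T(v,α)² − ⟨R₁₂²⟩_v ] > C₁(v,α), where the inner liminf is over integers N with αN an integer. -/

import Mathlib

/-!
The covariance of `H_v` is `2 N R₁₂²`, and `R₁₂ = T` on the diagonal, so Gaussian integration by
parts gives `E ⟨H_v⟩ = 2 N β (T² - E ⟨R₁₂²⟩)`. The entropy of the Gibbs measure is at most
`N log 2`, hence `β (T² - E ⟨R₁₂²⟩)` lies between `E max H_v / (2 N) - log 2 / (2 β)` and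
`E max H_v / (2 N)`, and it remains to bound the ground state energy `E max H_v` from below by a
multiple of `N`. Restrict to configurations containing `ℓ` pairs of opposite spins and a fixed
tail, with `ℓ` of order `N`. Discarding all couplings except those between the pairs and
the tail only lowers the expected maximum, and what remains is affine in the orientations of the
pairs. These can be chosen freely without leaving `S_N(α)`, so each pair gains the expected absolute
value of a Gaussian of variance of order `1`.
-/

open Finset MeasureTheory ProbabilityTheory

noncomputable section

/-- The law of the independent Gaussian entries used to build a GOE matrix: a product of
centered real Gaussians indexed by pairs `(i,j)`, with variance `2` on the diagonal and `1`
off the diagonal.  (Only the coordinates with `i ≤ j` are ever read off, so this realizes a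
GOE matrix: the entries `(J_{ij})_{i≤j}` are independent centered Gaussians with
`Var(J_{ij}) = 1` for `i < j` and `Var(J_{ii}) = 2`.) -/
def goeMeasure (N : ℕ) : Measure ((Fin N × Fin N) → ℝ) :=
  Measure.pi fun p => gaussianReal 0 (if p.1 = p.2 then 2 else 1)

/-- The symmetric (GOE) matrix built from the sample `ω`. -/
def Jmat {N : ℕ} (ω : (Fin N × Fin N) → ℝ) (i j : Fin N) : ℝ :=
  if i ≤ j then ω (i, j) else ω (j, i)

/-- The value `±1` of a Boolean spin. -/
def spin (b : Bool) : ℝ := if b then 1 else -1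

/-- The configuration space `S_N(α) = {σ ∈ {−1,1}^N : ∑ᵢ σᵢ = N(2α−1)}`. -/
def SNset (N : ℕ) (α : ℚ) : Set (Fin N → Bool) :=
  {σ | ∑ i, spin (σ i) = (N : ℝ) * (2 * (α : ℝ) - 1)}

open Classical in
/-- `S_N(α)` as a finite set. -/
def SNfinset (N : ℕ) (α : ℚ) : Finset (Fin N → Bool) :=
  Finset.univ.filter fun σ => ∑ i, spin (σ i) = (N : ℝ) * (2 * (α : ℝ) - 1)

/-- `H_0(σ) = N^{-1/2} ∑_{i,j} J_{ij} σ_i σ_j`. -/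
def H0 {N : ℕ} (ω : (Fin N × Fin N) → ℝ) (σ : Fin N → Bool) : ℝ :=
  (Real.sqrt N)⁻¹ * ∑ i, ∑ j, Jmat ω i j * spin (σ i) * spin (σ j)

/-- `g_i = N^{-1/2} ∑_j J_{ij}`. -/
def gvec {N : ℕ} (ω : (Fin N × Fin N) → ℝ) (i : Fin N) : ℝ :=
  (Real.sqrt N)⁻¹ * ∑ j, Jmat ω i j

/-- `H_1(σ) = H_0(σ) − 2(2α−1) ∑ᵢ gᵢ σᵢ + (2α−1)² N^{-1/2} ∑_{i,j} J_{ij}`. -/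
def H1 {N : ℕ} (α : ℚ) (ω : (Fin N × Fin N) → ℝ) (σ : Fin N → Bool) : ℝ :=
  H0 ω σ - 2 * (2 * (α : ℝ) - 1) * ∑ i, gvec ω i * spin (σ i)
    + (2 * (α : ℝ) - 1) ^ 2 * ((Real.sqrt N)⁻¹ * ∑ i, ∑ j, Jmat ω i j)

/-- `E[max_{σ ∈ S_N(α)} H(σ)]`, the expectation over the GOE matrix of the maximum of a
Hamiltonian `H` over the configuration space `S_N(α)`. -/
def Emax (N : ℕ) (α : ℚ) (H : ((Fin N × Fin N) → ℝ) → (Fin N → Bool) → ℝ) : ℝ :=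
  ∫ ω, sSup ((H ω) '' SNset N α) ∂(goeMeasure N)

end

/-- `α N` is a (nonnegative) integer. -/
def alphaIntegral (α : ℚ) (N : ℕ) : Prop := ∃ k : ℕ, α * (N : ℚ) = (k : ℚ)

noncomputable section

/-- The interpolating Hamiltonian
`H_v(σ) = N^{-1/2} ∑_{i,j} J_{ij}(σ_i − √v(2α−1))(σ_j − √v(2α−1))`. -/
def Hv {N : ℕ} (α : ℚ) (v : ℝ) (ω : (Fin N × Fin N) → ℝ) (σ : Fin N → Bool) : ℝ :=
  (Real.sqrt N)⁻¹ * ∑ i, ∑ j, Jmat ω i j *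
    (spin (σ i) - Real.sqrt v * (2 * (α : ℝ) - 1)) *
    (spin (σ j) - Real.sqrt v * (2 * (α : ℝ) - 1))

/-- The interpolating free energy
`F_N(v,β;α) = N^{-1} E[log ∑_{σ ∈ S_N(α)} exp(β H_v(σ))]`. -/
def FN (N : ℕ) (α : ℚ) (v β : ℝ) : ℝ :=
  (N : ℝ)⁻¹ * ∫ ω, Real.log (∑ σ ∈ SNfinset N α, Real.exp (β * Hv α v ω σ)) ∂(goeMeasure N)

/-- The overlap `R₁₂ = N^{-1} ∑ᵢ τ¹ᵢ τ²ᵢ` of two configurations, where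
`τᵢ = σᵢ − √v(2α−1)`. -/
def R12 {N : ℕ} (α : ℚ) (v : ℝ) (σ₁ σ₂ : Fin N → Bool) : ℝ :=
  (N : ℝ)⁻¹ * ∑ i, (spin (σ₁ i) - Real.sqrt v * (2 * (α : ℝ) - 1)) *
    (spin (σ₂ i) - Real.sqrt v * (2 * (α : ℝ) - 1))

/-- `T(v,α) = α(1−√v(2α−1))² + (1−α)(1+√v(2α−1))²`. -/
def Tva (α : ℚ) (v : ℝ) : ℝ :=
  (α : ℝ) * (1 - Real.sqrt v * (2 * (α : ℝ) - 1)) ^ 2 +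
    (1 - (α : ℝ)) * (1 + Real.sqrt v * (2 * (α : ℝ) - 1)) ^ 2

/-- The two-replica Gibbs average `⟨h⟩_v` at fixed disorder `ω`: the average of `h` over
two independent samples from the Gibbs measure on `S_N(α)` proportional to `exp(β H_v(σ))`. -/
def gibbs2 (N : ℕ) (α : ℚ) (v β : ℝ) (ω : (Fin N × Fin N) → ℝ)
    (h : (Fin N → Bool) → (Fin N → Bool) → ℝ) : ℝ :=
  (∑ σ₁ ∈ SNfinset N α, ∑ σ₂ ∈ SNfinset N α,
      h σ₁ σ₂ * Real.exp (β * Hv α v ω σ₁) * Real.exp (β * Hv α v ω σ₂)) /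
    (∑ σ ∈ SNfinset N α, Real.exp (β * Hv α v ω σ)) ^ 2

/-- `E[⟨h⟩_v]`: the expectation over the disorder of the two-replica Gibbs average. -/
def Egibbs2 (N : ℕ) (α : ℚ) (v β : ℝ)
    (h : (Fin N → Bool) → (Fin N → Bool) → ℝ) : ℝ :=
  ∫ ω, gibbs2 N α v β ω h ∂(goeMeasure N)

end

open scoped NNReal Matrix

section GaussianReal

variable {μ : ℝ} {w : ℝ≥0}

theorem hasDerivAt_gaussianPDFReal (hw : w ≠ 0) (x : ℝ) :
    HasDerivAt (gaussianPDFReal μ w) (-((x - μ) / w) * gaussianPDFReal μ w x) x := by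
  have hexp : HasDerivAt (fun y : ℝ => -(y - μ) ^ 2 / (2 * (w : ℝ))) (-((x - μ) / w)) x := by
    refine ((((hasDerivAt_id x).sub_const μ).pow 2).neg.div_const (2 * (w : ℝ))).congr_deriv ?_
    simp only [id_eq]
    field_simp
    push_cast
    ring
  rw [gaussianPDFReal_def]
  exact (hexp.exp.const_mul _).congr_deriv (by ring)

theorem integrable_gaussianReal_iff (hw : w ≠ 0) {f : ℝ → ℝ} :
    Integrable f (gaussianReal μ w) ↔ Integrable fun x => f x * gaussianPDFReal μ w x := by
  simp only [gaussianReal_of_var_ne_zero _ hw,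
    integrable_withDensity_iff (measurable_gaussianPDF _ _)
      (ae_of_all _ fun _ => gaussianPDF_lt_top), toReal_gaussianPDF]

theorem integral_sub_mul_gaussianReal {f f' : ℝ → ℝ} (hf : ∀ x, HasDerivAt f (f' x) x)
    (hint : Integrable f (gaussianReal μ w))
    (hint_mul : Integrable (fun x => (x - μ) * f x) (gaussianReal μ w))
    (hint' : Integrable f' (gaussianReal μ w)) :
    ∫ x, (x - μ) * f x ∂gaussianReal μ w = w * ∫ x, f' x ∂gaussianReal μ w := by
  rcases eq_or_ne w 0 with rfl | hw
  · simp
  have hw' : (w : ℝ) ≠ 0 := by exact_mod_cast hw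
  rw [integrable_gaussianReal_iff hw] at hint hint_mul hint'
  have hdrift : ∀ x, f x * (-((x - μ) / w) * gaussianPDFReal μ w x) =
      -(w : ℝ)⁻¹ * ((x - μ) * f x * gaussianPDFReal μ w x) := fun x => by ring
  have hparts := integral_mul_deriv_eq_deriv_mul_of_integrable (fun x _ => hf x)
    (fun x _ => hasDerivAt_gaussianPDFReal (μ := μ) hw x)
    (by simpa only [Pi.mul_def, hdrift] using hint_mul.const_mul (-(w : ℝ)⁻¹)) hint' hint
  simp only [hdrift, integral_const_mul] at hparts
  simp only [integral_gaussianReal_eq_integral_smul hw, smul_eq_mul,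
    mul_comm (gaussianPDFReal _ _ _)]
  field_simp at hparts
  linarith

theorem integral_abs_gaussianReal_zero (w : ℝ≥0) :
    ∫ x, |x| ∂gaussianReal 0 w = √(2 * w / Real.pi) := by
  rcases eq_or_ne w 0 with rfl | hw
  · simp
  have hdensity : ∀ x : ℝ, gaussianPDFReal 0 w x * |x| =
      (√(2 * Real.pi * w))⁻¹ * (|x| ^ (1 : ℝ) * Real.exp (-(2 * (w : ℝ))⁻¹ * |x| ^ (2 : ℝ))) := by
    intro x
    simp only [gaussianPDFReal_def, sub_zero, Real.rpow_one, Real.rpow_two, sq_abs]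
    rw [show -x ^ 2 / (2 * (w : ℝ)) = -(2 * (w : ℝ))⁻¹ * x ^ 2 by ring]
    ring
  simp only [integral_gaussianReal_eq_integral_smul hw, smul_eq_mul, hdensity, integral_const_mul]
  rw [integral_comp_abs (f := fun x => x ^ (1 : ℝ) * Real.exp (-(2 * (w : ℝ))⁻¹ * x ^ (2 : ℝ))),
    integral_rpow_mul_exp_neg_mul_rpow two_pos (by norm_num) (by positivity)]
  norm_num [Real.rpow_neg_one]
  field_simp
  rw [Real.sq_sqrt (by positivity), Real.sq_sqrt (by positivity)]
  ring

end GaussianReal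

section PiUpdate

variable {P : Type*} [Fintype P] [DecidableEq P] {E : P → Type*} [∀ p, MeasurableSpace (E p)]
  {μ : ∀ p, Measure (E p)} [∀ p, IsProbabilityMeasure (μ p)]

theorem measurePreserving_update (p : P) :
    MeasurePreserving (fun z : E p × (∀ q, E q) => Function.update z.2 p z.1)
      ((μ p).prod (Measure.pi μ)) (Measure.pi μ) := by
  have hmeas : Measurable fun z : E p × (∀ q, E q) => Function.update z.2 p z.1 :=
    measurable_update'.comp measurable_swap
  refine ⟨hmeas, (Measure.pi_eq fun s hs => ?_).symm⟩
  have hpre : (fun z : E p × (∀ q, E q) => Function.update z.2 p z.1) ⁻¹' Set.univ.pi s =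
      s p ×ˢ Set.univ.pi (Function.update s p Set.univ) := by
    ext z
    simp only [Set.mem_preimage, Set.mem_univ_pi, Set.mem_prod]
    refine ⟨fun h => ⟨by simpa using h p, fun q => ?_⟩, fun h q => ?_⟩ <;>
      rcases eq_or_ne q p with rfl | hq
    · simp
    · simpa [hq] using h q
    · simpa using h.1
    · simpa [hq] using h.2 q
  rw [Measure.map_apply hmeas (.univ_pi hs), hpre, Measure.prod_prod, Measure.pi_pi,
    ← mul_prod_erase univ (fun q => μ q (s q)) (mem_univ p),
    ← mul_prod_erase univ (fun q => μ q (Function.update s p Set.univ q)) (mem_univ p)]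
  simp only [Function.update_self, measure_univ, one_mul]
  congr 1
  exact prod_congr rfl fun q hq => by rw [Function.update_of_ne (ne_of_mem_erase hq)]

theorem integrable_comp_update {F : (∀ q, E q) → ℝ} (p : P) (hF : Integrable F (Measure.pi μ)) :
    Integrable (fun z : E p × (∀ q, E q) => F (Function.update z.2 p z.1))
      ((μ p).prod (Measure.pi μ)) :=
  (measurePreserving_update p).integrable_comp_of_integrable hF

theorem ae_integrable_update {F : (∀ q, E q) → ℝ} (p : P) (hF : Integrable F (Measure.pi μ)) :
    ∀ᵐ ω ∂Measure.pi μ, Integrable (fun y => F (Function.update ω p y)) (μ p) :=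
  (integrable_comp_update p hF).prod_left_ae

theorem integral_pi_eq_integral_update {F : (∀ q, E q) → ℝ} (p : P)
    (hF : Integrable F (Measure.pi μ)) :
    ∫ ω, F ω ∂Measure.pi μ = ∫ ω, ∫ y, F (Function.update ω p y) ∂μ p ∂Measure.pi μ := by
  have hupdate := measurePreserving_update (μ := μ) p
  have hmap := integral_map (f := F) hupdate.aemeasurable
    (hupdate.map_eq.symm ▸ hF.aestronglyMeasurable)
  rw [hupdate.map_eq] at hmap
  rw [hmap, integral_prod_symm _ (integrable_comp_update p hF)]

end PiUpdate

section GaussianPi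

variable {P : Type*} [Fintype P]

/-- The law of independent centred Gaussian variables with variances `w`; a centred Gaussian
field on a finite set is represented by linear forms `ω ↦ a ⬝ᵥ ω` under this measure. -/
noncomputable def gaussianPi (w : P → ℝ≥0) : Measure (P → ℝ) :=
  Measure.pi fun p => gaussianReal 0 (w p)

/-- The covariance of the linear forms `a ⬝ᵥ ω` and `b ⬝ᵥ ω` under `gaussianPi w`. -/
def gaussianCov (w : P → ℝ≥0) (a b : P → ℝ) : ℝ :=
  ∑ p, w p * a p * b p

variable {w : P → ℝ≥0}

instance : IsProbabilityMeasure (gaussianPi w) := by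
  unfold gaussianPi
  infer_instance

theorem gaussianCov_smul_smul (c : ℝ) (a b : P → ℝ) :
    gaussianCov w (c • a) (c • b) = c ^ 2 * gaussianCov w a b := by
  simp only [gaussianCov, mul_sum, Pi.smul_apply, smul_eq_mul]
  exact sum_congr rfl fun p _ => by ring

theorem gaussianCov_self_nonneg (a : P → ℝ) : 0 ≤ gaussianCov w a a :=
  sum_nonneg fun p _ => by rw [mul_assoc]; exact mul_nonneg (w p).2 (mul_self_nonneg _)

theorem measurable_dotProduct (a : P → ℝ) : Measurable fun ω : P → ℝ => a ⬝ᵥ ω := by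
  unfold dotProduct
  fun_prop

theorem map_dotProduct_gaussianPi (a : P → ℝ) :
    (gaussianPi w).map (a ⬝ᵥ ·) = gaussianReal 0 (gaussianCov w a a).toNNReal := by
  have hcoord : ∀ p, HasLaw (fun ω : P → ℝ => ω p) (gaussianReal 0 (w p)) (gaussianPi w) :=
    fun p => (measurePreserving_eval (fun p => gaussianReal 0 (w p)) p).hasLaw
  have hindep : iIndepFun (fun p (ω : P → ℝ) => a p * ω p) (gaussianPi w) :=
    iIndepFun_pi fun p => by fun_prop
  have hgauss : ∀ p, HasGaussianLaw (fun ω : P → ℝ => a p * ω p) (gaussianPi w) :=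
    fun p => (hcoord p).hasGaussianLaw.fun_smul (a p)
  have hlaw := (hindep.hasGaussianLaw_fun_sum hgauss).map_eq_gaussianReal
  have hmean : ∫ ω : P → ℝ, ∑ p, a p * ω p ∂gaussianPi w = 0 := by
    rw [integral_finsetSum _ fun p _ => (hgauss p).integrable]
    refine sum_eq_zero fun p _ => ?_
    rw [integral_const_mul, (hcoord p).integral_eq, integral_id_gaussianReal, mul_zero]
  have hvar : Var[fun ω : P → ℝ => ∑ p, a p * ω p; gaussianPi w] = gaussianCov w a a := by
    have hsum := variance_sum_pi (μ := fun p => gaussianReal 0 (w p)) (X := fun p x => a p * x)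
      fun p => (memLp_id_gaussianReal 2).const_mul (a p)
    rw [Finset.sum_fn] at hsum
    refine hsum.trans (sum_congr rfl fun p _ => ?_)
    rw [variance_const_mul, variance_fun_id_gaussianReal]
    ring
  rwa [hmean, hvar] at hlaw

theorem integral_dotProduct_gaussianPi (a : P → ℝ) : ∫ ω, a ⬝ᵥ ω ∂gaussianPi w = 0 := by
  rw [← integral_map (φ := (a ⬝ᵥ ·)) (f := fun x : ℝ => x) (measurable_dotProduct a).aemeasurable
    measurable_id.aestronglyMeasurable, map_dotProduct_gaussianPi]
  exact integral_id_gaussianReal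

theorem integrable_dotProduct_gaussianPi (a : P → ℝ) :
    Integrable (fun ω => a ⬝ᵥ ω) (gaussianPi w) := by
  have h : Integrable id ((gaussianPi w).map (a ⬝ᵥ ·)) := by
    rw [map_dotProduct_gaussianPi]
    exact (memLp_id_gaussianReal 1).integrable le_rfl
  exact (integrable_map_measure measurable_id.aestronglyMeasurable
    (measurable_dotProduct a).aemeasurable).1 h

theorem integral_abs_dotProduct_gaussianPi (a : P → ℝ) :
    ∫ ω, |a ⬝ᵥ ω| ∂gaussianPi w = √(2 * gaussianCov w a a / Real.pi) := by
  rw [← integral_map (φ := (a ⬝ᵥ ·)) (f := abs) (measurable_dotProduct a).aemeasurable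
    continuous_abs.aestronglyMeasurable, map_dotProduct_gaussianPi,
    integral_abs_gaussianReal_zero, Real.coe_toNNReal _ (gaussianCov_self_nonneg a)]

theorem integrable_exp_dotProduct_gaussianPi (a : P → ℝ) :
    Integrable (fun ω => Real.exp (a ⬝ᵥ ω)) (gaussianPi w) := by
  have h : Integrable Real.exp ((gaussianPi w).map (a ⬝ᵥ ·)) := by
    rw [map_dotProduct_gaussianPi]
    simpa using integrable_exp_mul_gaussianReal (μ := 0) (v := (gaussianCov w a a).toNNReal) 1
  exact (integrable_map_measure (by fun_prop) (measurable_dotProduct a).aemeasurable).1 h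

theorem integral_exp_dotProduct_gaussianPi (a : P → ℝ) :
    ∫ ω, Real.exp (a ⬝ᵥ ω) ∂gaussianPi w = Real.exp (gaussianCov w a a / 2) := by
  have h := congrFun (mgf_fun_id_gaussianReal (μ := 0) (v := (gaussianCov w a a).toNNReal)) 1
  rw [← integral_map (φ := (a ⬝ᵥ ·)) (f := Real.exp) (measurable_dotProduct a).aemeasurable
    (by fun_prop), map_dotProduct_gaussianPi]
  simpa [mgf, Real.coe_toNNReal _ (gaussianCov_self_nonneg a)] using h

theorem integral_eval_mul_gaussianPi [DecidableEq P] {p : P} {G G' : (P → ℝ) → ℝ}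
    (hG : ∀ ω, HasDerivAt (fun y => G (Function.update ω p y)) (G' ω) (ω p))
    (hint : Integrable G (gaussianPi w))
    (hint_mul : Integrable (fun ω => ω p * G ω) (gaussianPi w))
    (hint' : Integrable G' (gaussianPi w)) :
    ∫ ω, ω p * G ω ∂gaussianPi w = w p * ∫ ω, G' ω ∂gaussianPi w := by
  unfold gaussianPi at *
  rw [integral_pi_eq_integral_update p hint_mul, integral_pi_eq_integral_update p hint',
    ← integral_const_mul]
  refine integral_congr_ae ?_
  filter_upwards [ae_integrable_update p hint, ae_integrable_update p hint_mul,
    ae_integrable_update p hint'] with ω hω hω_mul hω'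
  have hderiv : ∀ y, HasDerivAt (fun z => G (Function.update ω p z))
      (G' (Function.update ω p y)) y := fun y => by
    simpa using hG (Function.update ω p y)
  simpa using integral_sub_mul_gaussianReal hderiv hω (by simpa using hω_mul) hω'

end GaussianPi

section Gibbs

variable {ι : Type*} {S : Finset ι} {x : ι → ℝ} {σ : ι}

/-- The Gibbs weight of `σ` among the states `S` with log-weights `x`; the inverse temperature
is part of `x`. -/
noncomputable def gibbsWeight (S : Finset ι) (x : ι → ℝ) (σ : ι) : ℝ :=
  Real.exp (x σ) / ∑ s ∈ S, Real.exp (x s)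

/-- The expectation of `f` under the Gibbs measure on `S` with log-weights `x`. -/
noncomputable def gibbsAvg (S : Finset ι) (x f : ι → ℝ) : ℝ :=
  ∑ σ ∈ S, gibbsWeight S x σ * f σ

theorem gibbsWeight_nonneg : 0 ≤ gibbsWeight S x σ :=
  div_nonneg (Real.exp_pos _).le (sum_nonneg fun _ _ => (Real.exp_pos _).le)

theorem sum_exp_pos (hS : S.Nonempty) : 0 < ∑ s ∈ S, Real.exp (x s) :=
  sum_pos (fun _ _ => Real.exp_pos _) hS

theorem sum_gibbsWeight (hS : S.Nonempty) : ∑ s ∈ S, gibbsWeight S x s = 1 := by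
  simp only [gibbsWeight, ← sum_div]
  exact div_self (sum_exp_pos hS).ne'

theorem gibbsWeight_le_one (hσ : σ ∈ S) : gibbsWeight S x σ ≤ 1 :=
  (single_le_sum (f := gibbsWeight S x) (fun _ _ => gibbsWeight_nonneg) hσ).trans_eq
    (sum_gibbsWeight ⟨σ, hσ⟩)

theorem gibbsAvg_const (hS : S.Nonempty) (c : ℝ) : gibbsAvg S x (fun _ => c) = c := by
  rw [gibbsAvg, ← sum_mul, sum_gibbsWeight hS, one_mul]

theorem gibbsAvg_sub (f g : ι → ℝ) :
    gibbsAvg S x (fun s => f s - g s) = gibbsAvg S x f - gibbsAvg S x g := by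
  simp only [gibbsAvg, mul_sub, sum_sub_distrib]

theorem gibbsAvg_sum {P : Type*} [Fintype P] (c : P → ℝ) (f : P → ι → ℝ) :
    gibbsAvg S x (fun s => ∑ p, c p * f p s) = ∑ p, c p * gibbsAvg S x (f p) := by
  simp only [gibbsAvg, mul_sum]
  rw [sum_comm]
  exact sum_congr rfl fun p _ => sum_congr rfl fun s _ => by ring

theorem gibbsAvg_gibbsAvg (h : ι → ι → ℝ) :
    gibbsAvg S x (fun σ => gibbsAvg S x (h σ)) =
      (∑ σ ∈ S, ∑ s ∈ S, h σ s * Real.exp (x σ) * Real.exp (x s)) /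
        (∑ s ∈ S, Real.exp (x s)) ^ 2 := by
  simp only [gibbsAvg, gibbsWeight, sum_div, mul_sum]
  exact sum_congr rfl fun σ _ => sum_congr rfl fun s _ => by ring

theorem hasDerivAt_gibbsWeight {y : ℝ → ι → ℝ} {y' : ι → ℝ} {t : ℝ}
    (hy : ∀ s, HasDerivAt (fun u => y u s) (y' s) t) (hσ : σ ∈ S) :
    HasDerivAt (fun u => gibbsWeight S (y u) σ)
      (gibbsWeight S (y t) σ * (y' σ - gibbsAvg S (y t) y')) t := by
  have hZ := (sum_exp_pos (x := y t) ⟨σ, hσ⟩).ne'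
  refine ((hy σ).exp.fun_div (HasDerivAt.fun_sum fun s (_ : s ∈ S) => (hy s).exp) hZ).congr_deriv ?_
  simp only [gibbsAvg, gibbsWeight, div_mul_eq_mul_div, ← sum_div]
  field_simp

theorem gibbsAvg_le_sup' (hS : S.Nonempty) : gibbsAvg S x x ≤ S.sup' hS x :=
  calc gibbsAvg S x x ≤ gibbsAvg S x fun _ => S.sup' hS x :=
        sum_le_sum fun _ hs => mul_le_mul_of_nonneg_left (le_sup' x hs) gibbsWeight_nonneg
    _ = S.sup' hS x := gibbsAvg_const hS _

theorem sup'_le_log_sum_exp (hS : S.Nonempty) :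
    S.sup' hS x ≤ Real.log (∑ s ∈ S, Real.exp (x s)) :=
  sup'_le hS x fun _ hs => (Real.le_log_iff_exp_le (sum_exp_pos hS)).2 <|
    single_le_sum (f := fun s => Real.exp (x s)) (fun _ _ => (Real.exp_pos _).le) hs

/-- The entropy of the Gibbs measure is at most `log #S`. -/
theorem log_sum_exp_sub_log_card_le_gibbsAvg (hS : S.Nonempty) :
    Real.log (∑ s ∈ S, Real.exp (x s)) - Real.log #S ≤ gibbsAvg S x x := by
  set Z := ∑ s ∈ S, Real.exp (x s)
  have hZ : 0 < Z := sum_exp_pos hS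
  have hn : (0 : ℝ) < #S := by exact_mod_cast hS.card_pos
  have hterm : ∀ σ ∈ S, gibbsWeight S x σ - (#S : ℝ)⁻¹ ≤
      gibbsWeight S x σ * (x σ - (Real.log Z - Real.log #S)) := fun σ _ => by
    have hg : 0 < gibbsWeight S x σ := div_pos (Real.exp_pos _) hZ
    have hlog : Real.log (gibbsWeight S x σ * #S) = x σ - (Real.log Z - Real.log #S) := by
      rw [Real.log_mul hg.ne' hn.ne', gibbsWeight, Real.log_div (Real.exp_ne_zero _) hZ.ne',
        Real.log_exp]
      ring
    have h := mul_le_mul_of_nonneg_left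
      (Real.one_sub_inv_le_log_of_pos (mul_pos hg hn)) hg.le
    rw [hlog] at h
    refine le_trans (le_of_eq ?_) h
    field_simp
  have hsum := sum_le_sum hterm
  rw [sum_sub_distrib, sum_gibbsWeight hS, sum_const, nsmul_eq_mul, mul_inv_cancel₀ hn.ne',
    sub_self] at hsum
  have havg := gibbsAvg_sub (S := S) (x := x) x fun _ => Real.log Z - Real.log #S
  rw [gibbsAvg_const hS] at havg
  exact sub_nonneg.1 (hsum.trans_eq havg)

end Gibbs

section GaussianField

variable {P ι : Type*} [Fintype P] {w : P → ℝ≥0} {S : Finset ι} {a : ι → P → ℝ} {σ : ι}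

/-- The centred Gaussian field on `ι` whose value at `s` is the linear form with coefficients
`a s`, evaluated at a sample `ω` of `gaussianPi w`. -/
def gaussianField (a : ι → P → ℝ) (ω : P → ℝ) (s : ι) : ℝ :=
  a s ⬝ᵥ ω

theorem integrable_sup'_gaussianField (hS : S.Nonempty) (a : ι → P → ℝ) :
    Integrable (fun ω => S.sup' hS (gaussianField a ω)) (gaussianPi w) := by
  have h := sup'_induction hS (fun s ω => gaussianField a ω s)
    (p := fun f => Integrable f (gaussianPi w)) (fun _ hf _ hg => hf.sup hg)
    fun s _ => integrable_dotProduct_gaussianPi (a s)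
  exact h.congr (ae_of_all _ fun ω => Finset.sup'_apply hS _ ω)

theorem measurable_gibbsWeight_gaussianField :
    Measurable fun ω => gibbsWeight S (gaussianField a ω) σ :=
  (measurable_dotProduct (a σ)).exp.div
    (Finset.measurable_fun_sum S fun s _ => (measurable_dotProduct (a s)).exp)

theorem integrable_gibbsWeight_mul {f : (P → ℝ) → ℝ} (hf : Integrable f (gaussianPi w))
    (hσ : σ ∈ S) : Integrable (fun ω => gibbsWeight S (gaussianField a ω) σ * f ω) (gaussianPi w) :=
  hf.bdd_mul (c := 1) measurable_gibbsWeight_gaussianField.aestronglyMeasurable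
    (ae_of_all _ fun _ => by
      rw [Real.norm_of_nonneg gibbsWeight_nonneg]
      exact gibbsWeight_le_one hσ)

theorem integrable_gibbsAvg {f : (P → ℝ) → ι → ℝ}
    (hf : ∀ s ∈ S, Integrable (fun ω => f ω s) (gaussianPi w)) :
    Integrable (fun ω => gibbsAvg S (gaussianField a ω) (f ω)) (gaussianPi w) :=
  integrable_finsetSum _ fun s hs => integrable_gibbsWeight_mul (hf s hs) hs

theorem integrable_eval_mul_gibbsWeight (p : P) (hσ : σ ∈ S) :
    Integrable (fun ω => ω p * gibbsWeight S (gaussianField a ω) σ) (gaussianPi w) := by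
  have hp : Integrable (fun ω : P → ℝ => ω p) (gaussianPi w) :=
    integrable_comp_eval (μ := fun p => gaussianReal 0 (w p))
      ((memLp_id_gaussianReal 1).integrable le_rfl)
  simpa only [mul_comm] using integrable_gibbsWeight_mul hp hσ

theorem integrable_gibbsWeight_mul_sub_gibbsAvg (c : ℝ) (f : ι → ℝ) (hσ : σ ∈ S) :
    Integrable (fun ω => gibbsWeight S (gaussianField a ω) σ *
      (c - gibbsAvg S (gaussianField a ω) f)) (gaussianPi w) :=
  integrable_gibbsWeight_mul
    ((integrable_const c).sub (integrable_gibbsAvg fun s _ => integrable_const (f s))) hσ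

theorem hasDerivAt_gaussianField_update [DecidableEq P] (a : ι → P → ℝ) (ω : P → ℝ) (p : P)
    (s : ι) (y : ℝ) :
    HasDerivAt (fun z => gaussianField a (Function.update ω p z) s) (a s p) y := by
  have hcoord := hasDerivAt_pi.1 (hasDerivAt_update ω p y)
  refine (HasDerivAt.fun_sum fun q (_ : q ∈ univ) => (hcoord q).const_mul (a s q)).congr_deriv ?_
  simp [Pi.single_apply]

theorem integral_eval_mul_gibbsWeight (p : P) (hσ : σ ∈ S) :
    ∫ ω, ω p * gibbsWeight S (gaussianField a ω) σ ∂gaussianPi w =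
      w p * ∫ ω, gibbsWeight S (gaussianField a ω) σ *
        (a σ p - gibbsAvg S (gaussianField a ω) (a · p)) ∂gaussianPi w := by
  classical
  refine integral_eval_mul_gaussianPi (fun ω => ?_) ?_ ?_ ?_
  · simpa using hasDerivAt_gibbsWeight
      (fun s => hasDerivAt_gaussianField_update a ω p s (ω p)) hσ
  · simpa using integrable_gibbsWeight_mul (integrable_const 1) hσ
  · exact integrable_eval_mul_gibbsWeight p hσ
  · exact integrable_gibbsWeight_mul_sub_gibbsAvg _ _ hσ

theorem integral_gibbsWeight_mul_dotProduct (b : P → ℝ) (hσ : σ ∈ S) :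
    ∫ ω, gibbsWeight S (gaussianField a ω) σ * b ⬝ᵥ ω ∂gaussianPi w =
      ∫ ω, gibbsWeight S (gaussianField a ω) σ * (gaussianCov w b (a σ) -
        gibbsAvg S (gaussianField a ω) fun s => gaussianCov w b (a s)) ∂gaussianPi w := by
  have hG (p : P) : Integrable (fun ω => ω p * gibbsWeight S (gaussianField a ω) σ)
      (gaussianPi w) := integrable_eval_mul_gibbsWeight p hσ
  have hG' (p : P) : Integrable (fun ω => gibbsWeight S (gaussianField a ω) σ *
      (a σ p - gibbsAvg S (gaussianField a ω) (a · p))) (gaussianPi w) :=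
    integrable_gibbsWeight_mul_sub_gibbsAvg _ _ hσ
  calc ∫ ω, gibbsWeight S (gaussianField a ω) σ * b ⬝ᵥ ω ∂gaussianPi w
      = ∫ ω, ∑ p, b p * (ω p * gibbsWeight S (gaussianField a ω) σ) ∂gaussianPi w := by
        refine integral_congr_ae (ae_of_all _ fun ω => ?_)
        simp only [dotProduct, mul_sum]
        exact sum_congr rfl fun p _ => by ring
    _ = ∑ p, w p * b p * ∫ ω, gibbsWeight S (gaussianField a ω) σ *
          (a σ p - gibbsAvg S (gaussianField a ω) (a · p)) ∂gaussianPi w := by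
        rw [integral_finsetSum _ fun p _ => (hG p).const_mul (b p)]
        refine sum_congr rfl fun p _ => ?_
        rw [integral_const_mul, integral_eval_mul_gibbsWeight p hσ]
        ring
    _ = ∫ ω, ∑ p, w p * b p * (gibbsWeight S (gaussianField a ω) σ *
          (a σ p - gibbsAvg S (gaussianField a ω) (a · p))) ∂gaussianPi w := by
        rw [integral_finsetSum _ fun p _ => (hG' p).const_mul (w p * b p)]
        simp only [integral_const_mul]
    _ = _ := by
        refine integral_congr_ae (ae_of_all _ fun ω => ?_)
        simp only [gaussianCov, gibbsAvg_sum, ← sum_sub_distrib, mul_sum]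
        exact sum_congr rfl fun p _ => by ring

theorem integral_gibbsAvg_gaussianField :
    ∫ ω, gibbsAvg S (gaussianField a ω) (gaussianField a ω) ∂gaussianPi w =
      ∫ ω, gibbsAvg S (gaussianField a ω) (fun σ => gaussianCov w (a σ) (a σ) -
        gibbsAvg S (gaussianField a ω) fun s => gaussianCov w (a σ) (a s)) ∂gaussianPi w := by
  have hX : ∀ s ∈ S, Integrable (fun ω => gaussianField a ω s) (gaussianPi w) :=
    fun s _ => integrable_dotProduct_gaussianPi (a s)
  have hK : ∀ σ ∈ S, Integrable (fun ω => gaussianCov w (a σ) (a σ) -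
      gibbsAvg S (gaussianField a ω) fun s => gaussianCov w (a σ) (a s)) (gaussianPi w) :=
    fun σ _ => (integrable_const _).sub (integrable_gibbsAvg fun _ _ => integrable_const _)
  unfold gibbsAvg at *
  rw [integral_finsetSum _ fun s hs => integrable_gibbsWeight_mul (hX s hs) hs,
    integral_finsetSum _ fun s hs => integrable_gibbsWeight_mul (hK s hs) hs]
  exact sum_congr rfl fun σ hσ => integral_gibbsWeight_mul_dotProduct (a σ) hσ

variable {D : ℝ}

theorem integral_gibbsAvg_gaussianField_of_cov_self (hS : S.Nonempty)
    (hD : ∀ σ ∈ S, gaussianCov w (a σ) (a σ) = D) :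
    ∫ ω, gibbsAvg S (gaussianField a ω) (gaussianField a ω) ∂gaussianPi w =
      D - ∫ ω, gibbsAvg S (gaussianField a ω) (fun σ => gibbsAvg S (gaussianField a ω) fun s =>
        gaussianCov w (a σ) (a s)) ∂gaussianPi w := by
  have hdiag : ∀ x : ι → ℝ, gibbsAvg S x (fun σ => gaussianCov w (a σ) (a σ)) = D := fun x =>
    (sum_congr rfl fun σ hσ => by simp only [hD σ hσ]).trans (gibbsAvg_const (x := x) hS D)
  simp only [integral_gibbsAvg_gaussianField, gibbsAvg_sub, hdiag]
  refine (integral_sub (integrable_const D) ?_).trans (by simp)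
  exact integrable_gibbsAvg fun _ _ => integrable_gibbsAvg fun _ _ => integrable_const _

theorem sub_integral_gibbsAvg_cov_le_integral_sup' (hS : S.Nonempty)
    (hD : ∀ σ ∈ S, gaussianCov w (a σ) (a σ) = D) :
    D - ∫ ω, gibbsAvg S (gaussianField a ω) (fun σ => gibbsAvg S (gaussianField a ω) fun s =>
        gaussianCov w (a σ) (a s)) ∂gaussianPi w ≤
      ∫ ω, S.sup' hS (gaussianField a ω) ∂gaussianPi w := by
  rw [← integral_gibbsAvg_gaussianField_of_cov_self hS hD]
  exact integral_mono (integrable_gibbsAvg fun s _ => integrable_dotProduct_gaussianPi (a s))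
    (integrable_sup'_gaussianField hS a) fun ω => gibbsAvg_le_sup' hS

theorem integral_sup'_sub_log_card_le (hS : S.Nonempty)
    (hD : ∀ σ ∈ S, gaussianCov w (a σ) (a σ) = D) :
    ∫ ω, S.sup' hS (gaussianField a ω) ∂gaussianPi w - Real.log #S ≤
      D - ∫ ω, gibbsAvg S (gaussianField a ω) (fun σ => gibbsAvg S (gaussianField a ω) fun s =>
        gaussianCov w (a σ) (a s)) ∂gaussianPi w := by
  have hsub := integral_sub (integrable_sup'_gaussianField (w := w) hS a)
    (integrable_const (Real.log #S))
  simp only [integral_const, probReal_univ, one_smul] at hsub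
  rw [← integral_gibbsAvg_gaussianField_of_cov_self hS hD, ← hsub]
  refine integral_mono ((integrable_sup'_gaussianField hS a).sub (integrable_const _))
    (integrable_gibbsAvg fun s _ => integrable_dotProduct_gaussianPi (a s)) fun ω => ?_
  exact (sub_le_sub_right (sup'_le_log_sum_exp hS) _).trans
    (log_sum_exp_sub_log_card_le_gibbsAvg hS)

theorem integral_sup'_gaussianField_le (hS : S.Nonempty)
    (hD : ∀ σ ∈ S, gaussianCov w (a σ) (a σ) ≤ D) :
    ∫ ω, S.sup' hS (gaussianField a ω) ∂gaussianPi w ≤ Real.log #S + D / 2 := by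
  set c := #S * Real.exp (D / 2)
  have hn : (0 : ℝ) < #S := by exact_mod_cast hS.card_pos
  have hc : 0 < c := by positivity
  have hexp (s : ι) : Integrable (fun ω => Real.exp (gaussianField a ω s)) (gaussianPi w) :=
    integrable_exp_dotProduct_gaussianPi (a s)
  have htangent (z : ℝ) (hz : 0 < z) : Real.log z ≤ z / c - 1 + Real.log c := by
    have h := Real.log_le_sub_one_of_pos (div_pos hz hc)
    rw [Real.log_div hz.ne' hc.ne'] at h
    linarith
  have hZ : ∫ ω, ∑ s ∈ S, Real.exp (gaussianField a ω s) ∂gaussianPi w ≤ c := by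
    rw [integral_finsetSum _ fun s _ => hexp s]
    refine (sum_le_card_nsmul S _ (Real.exp (D / 2)) fun s hs => ?_).trans_eq (nsmul_eq_mul _ _)
    refine (integral_exp_dotProduct_gaussianPi (a s)).trans_le (Real.exp_le_exp.2 ?_)
    linarith [hD s hs]
  calc ∫ ω, S.sup' hS (gaussianField a ω) ∂gaussianPi w
      ≤ ∫ ω, ((∑ s ∈ S, Real.exp (gaussianField a ω s)) / c + (Real.log c - 1)) ∂gaussianPi w := by
        refine integral_mono (integrable_sup'_gaussianField hS a)
          (((integrable_finsetSum _ fun s _ => hexp s).div_const c).add (integrable_const _))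
          fun ω => ?_
        linarith [sup'_le_log_sum_exp (x := gaussianField a ω) hS,
          htangent _ (sum_exp_pos (x := gaussianField a ω) hS)]
    _ = (∫ ω, ∑ s ∈ S, Real.exp (gaussianField a ω s) ∂gaussianPi w) / c + (Real.log c - 1) := by
        rw [integral_add ((integrable_finsetSum _ fun s _ => hexp s).div_const c)
          (integrable_const _), integral_div]
        simp
    _ ≤ 1 + (Real.log c - 1) := by gcongr; exact (div_le_one hc).2 hZ
    _ = Real.log #S + D / 2 := by
        rw [Real.log_mul hn.ne' (Real.exp_ne_zero _), Real.log_exp]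
        ring

theorem measurePreserving_ite_neg_gaussianPi (A : Set P) [DecidablePred (· ∈ A)] :
    MeasurePreserving (fun (ω : P → ℝ) p => if p ∈ A then ω p else -ω p)
      (gaussianPi w) (gaussianPi w) := by
  refine measurePreserving_pi (f := fun p x => if p ∈ A then x else -x) _ _ fun p => ?_
  by_cases hp : p ∈ A
  · simpa only [hp, if_true] using! MeasurePreserving.id _
  · simp only [hp, if_false]
    exact ⟨measurable_neg, by simpa using gaussianReal_map_neg (μ := 0) (v := w p)⟩

/-- Conditioning on the coordinates in `A` averages the others out; here the average is taken
over the reflection of the coordinates outside `A`. -/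
theorem integral_sup'_indicator_le (hS : S.Nonempty) (a : ι → P → ℝ) (A : Set P) :
    ∫ ω, S.sup' hS (gaussianField (fun s => A.indicator (a s)) ω) ∂gaussianPi w ≤
      ∫ ω, S.sup' hS (gaussianField a ω) ∂gaussianPi w := by
  classical
  set M := fun ω => S.sup' hS (gaussianField a ω)
  set R : (P → ℝ) → P → ℝ := fun ω p => if p ∈ A then ω p else -ω p
  have hR : MeasurePreserving R (gaussianPi w) (gaussianPi w) :=
    measurePreserving_ite_neg_gaussianPi A
  have hM : Integrable M (gaussianPi w) := integrable_sup'_gaussianField hS a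
  have hMR : Integrable (fun ω => M (R ω)) (gaussianPi w) := hR.integrable_comp_of_integrable hM
  have hmean : ∫ ω, M (R ω) ∂gaussianPi w = ∫ ω, M ω ∂gaussianPi w := by
    have h := integral_map (f := M) hR.aemeasurable
      (hR.map_eq.symm ▸ hM.aestronglyMeasurable)
    rwa [hR.map_eq, eq_comm] at h
  have havg (ω : P → ℝ) (s : ι) : gaussianField (fun s => A.indicator (a s)) ω s =
      (gaussianField a ω s + gaussianField a (R ω) s) / 2 := by
    simp only [gaussianField, dotProduct, ← sum_add_distrib, sum_div, R]
    refine sum_congr rfl fun p _ => ?_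
    by_cases hp : p ∈ A <;> simp [hp]
  calc ∫ ω, S.sup' hS (gaussianField (fun s => A.indicator (a s)) ω) ∂gaussianPi w
      ≤ ∫ ω, (M ω + M (R ω)) / 2 ∂gaussianPi w := by
        refine integral_mono (integrable_sup'_gaussianField hS _) ((hM.add hMR).div_const 2)
          fun ω => sup'_le hS _ fun s hs => ?_
        rw [havg]
        linarith [le_sup' (gaussianField a ω) hs, le_sup' (gaussianField a (R ω)) hs]
    _ = ∫ ω, M ω ∂gaussianPi w := by
        rw [integral_div, integral_add hM hMR, hmean]
        ring

/-- The signs `ε` can be chosen to match those of the linear forms `d l ⬝ᵥ ω`. -/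
theorem sum_sqrt_le_integral_sup'_gaussianField {L : Type*} [Fintype L] (hS : S.Nonempty)
    {c : P → ℝ} {d : L → P → ℝ} {f : (L → Bool) → ι} (hf : ∀ ε, f ε ∈ S)
    (ha : ∀ ε, a (f ε) = c + ∑ l, spin (ε l) • d l) :
    ∑ l, √(2 * gaussianCov w (d l) (d l) / Real.pi) ≤
      ∫ ω, S.sup' hS (gaussianField a ω) ∂gaussianPi w := by
  have habs (l : L) : Integrable (fun ω => |d l ⬝ᵥ ω|) (gaussianPi w) :=
    (integrable_dotProduct_gaussianPi (d l)).abs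
  have hpointwise (ω : P → ℝ) :
      c ⬝ᵥ ω + ∑ l, |d l ⬝ᵥ ω| ≤ S.sup' hS (gaussianField a ω) := by
    set ε : L → Bool := fun l => decide (0 ≤ d l ⬝ᵥ ω)
    have hε (l : L) : spin (ε l) * d l ⬝ᵥ ω = |d l ⬝ᵥ ω| := by
      by_cases h : 0 ≤ d l ⬝ᵥ ω
      · simp [ε, spin, h, abs_of_nonneg]
      · simp [ε, spin, h, abs_of_neg (not_le.1 h)]
    refine (le_of_eq ?_).trans (le_sup' (gaussianField a ω) (hf ε))
    simp only [gaussianField, ha, add_dotProduct, sum_dotProduct, smul_dotProduct, smul_eq_mul, hε]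
  calc ∑ l, √(2 * gaussianCov w (d l) (d l) / Real.pi)
      = ∫ ω, c ⬝ᵥ ω + ∑ l, |d l ⬝ᵥ ω| ∂gaussianPi w := by
        rw [integral_add (integrable_dotProduct_gaussianPi c)
          (integrable_finsetSum _ fun l _ => habs l), integral_finsetSum _ fun l _ => habs l]
        simp only [integral_dotProduct_gaussianPi, integral_abs_dotProduct_gaussianPi, zero_add]
    _ ≤ ∫ ω, S.sup' hS (gaussianField a ω) ∂gaussianPi w :=
        integral_mono ((integrable_dotProduct_gaussianPi c).add
          (integrable_finsetSum _ fun l _ => habs l)) (integrable_sup'_gaussianField hS a)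
          hpointwise

end GaussianField

section GOE

variable {N : ℕ}

/-- The variances of the coordinates of `goeMeasure`. -/
def goeVariance (p : Fin N × Fin N) : ℝ≥0 :=
  if p.1 = p.2 then 2 else 1

/-- The coefficients of the GOE quadratic form at `x`, as a linear form in the disorder. They
are upper triangular because `Jmat` only reads the coordinates `(i, j)` with `i ≤ j`. -/
def goeCoeff (x : Fin N → ℝ) (p : Fin N × Fin N) : ℝ :=
  if p.1 = p.2 then x p.1 * x p.2 else if p.1 < p.2 then 2 * (x p.1 * x p.2) else 0

theorem sum_sum_eq_sum_upper {n : Type*} [Fintype n] [LinearOrder n] (f : n → n → ℝ) :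
    ∑ i, ∑ j, f i j =
      ∑ p : n × n, ((if p.1 ≤ p.2 then f p.1 p.2 else 0) + if p.1 < p.2 then f p.2 p.1 else 0) := by
  have hlower : ∑ i, ∑ j, (if i < j then f j i else 0) = ∑ i, ∑ j, if i ≤ j then 0 else f i j := by
    rw [sum_comm]
    simp only [← not_lt, ite_not]
  simp only [Fintype.sum_prod_type, sum_add_distrib, hlower]
  simp only [← sum_add_distrib]
  refine sum_congr rfl fun i _ => sum_congr rfl fun j _ => ?_
  split_ifs <;> simp

theorem sum_Jmat_mul_mul (ω : Fin N × Fin N → ℝ) (x : Fin N → ℝ) :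
    ∑ i, ∑ j, Jmat ω i j * x i * x j = goeCoeff x ⬝ᵥ ω := by
  rw [sum_sum_eq_sum_upper, dotProduct]
  refine sum_congr rfl fun ⟨i, j⟩ _ => ?_
  rcases lt_trichotomy i j with h | rfl | h
  · simp only [goeCoeff, Jmat, h, h.le, h.ne, h.not_ge, if_true, if_false]
    ring
  · simp only [goeCoeff, Jmat, le_refl, lt_irrefl, if_true, if_false]
    ring
  · simp [goeCoeff, h.not_ge, h.not_gt, h.ne']

theorem gaussianCov_goeCoeff (x y : Fin N → ℝ) :
    gaussianCov goeVariance (goeCoeff x) (goeCoeff y) = 2 * (x ⬝ᵥ y) ^ 2 := by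
  rw [sq, dotProduct, sum_mul_sum, sum_sum_eq_sum_upper, gaussianCov, mul_sum]
  refine sum_congr rfl fun ⟨i, j⟩ _ => ?_
  rcases lt_trichotomy i j with h | rfl | h
  · simp only [goeCoeff, goeVariance, h, h.le, h.ne, if_true, if_false, NNReal.coe_one]
    ring
  · simp only [goeCoeff, goeVariance, le_refl, lt_irrefl, if_true, if_false]
    push_cast
    ring
  · simp [goeCoeff, h.not_ge, h.not_gt, h.ne']

/-- The shifted spins `τᵢ = σᵢ - m`; `Hv` uses `m = √v (2α - 1)`. -/
def shiftedSpin (m : ℝ) (σ : Fin N → Bool) (i : Fin N) : ℝ :=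
  spin (σ i) - m

end GOE

section SpinGlass

variable {N : ℕ} {α : ℚ} {v β : ℝ}

/-- The coefficients, as linear forms in the disorder, of the log-weights `β * Hv α v ω σ`. -/
noncomputable def hamiltonianCoeff (α : ℚ) (v β : ℝ) (σ : Fin N → Bool) : Fin N × Fin N → ℝ :=
  (β * (√N)⁻¹) • goeCoeff (shiftedSpin (√v * (2 * α - 1)) σ)

theorem gaussianField_hamiltonianCoeff (ω : Fin N × Fin N → ℝ) (σ : Fin N → Bool) :
    gaussianField (hamiltonianCoeff α v β) ω σ = β * Hv α v ω σ := by
  rw [gaussianField, hamiltonianCoeff, smul_dotProduct, smul_eq_mul, ← sum_Jmat_mul_mul, Hv,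
    mul_assoc]
  rfl

theorem gaussianCov_hamiltonianCoeff (hN : N ≠ 0) (σ s : Fin N → Bool) :
    gaussianCov goeVariance (hamiltonianCoeff α v β σ) (hamiltonianCoeff α v β s) =
      2 * N * β ^ 2 * R12 α v σ s ^ 2 := by
  have hN' : (0 : ℝ) < N := by positivity
  rw [hamiltonianCoeff, hamiltonianCoeff, gaussianCov_smul_smul, gaussianCov_goeCoeff, R12,
    mul_pow, mul_pow, inv_pow, Real.sq_sqrt hN'.le]
  simp only [dotProduct, shiftedSpin]
  field_simp

theorem sum_spin_sub_sq (m : ℝ) (σ : Fin N → Bool) :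
    ∑ i, (spin (σ i) - m) * (spin (σ i) - m) = N * (1 + m ^ 2) - 2 * m * ∑ i, spin (σ i) := by
  have h (b : Bool) : (spin b - m) * (spin b - m) = 1 + m ^ 2 - 2 * m * spin b := by
    cases b <;> simp only [spin, if_true, if_false, Bool.false_eq_true] <;> ring
  simp only [h, sum_sub_distrib, ← mul_sum]
  simp [mul_add]

theorem R12_self (hN : N ≠ 0) {σ : Fin N → Bool} (hσ : σ ∈ SNfinset N α) :
    R12 α v σ σ = Tva α v := by
  have hN' : (N : ℝ) ≠ 0 := by exact_mod_cast hN
  rw [R12, sum_spin_sub_sq, (mem_filter.1 hσ).2, Tva]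
  field_simp
  ring

theorem mul_Emax_Hv (hS : (SNfinset N α).Nonempty) (hβ : 0 ≤ β) :
    β * Emax N α (Hv α v) =
      ∫ ω, (SNfinset N α).sup' hS (gaussianField (hamiltonianCoeff α v β) ω)
        ∂gaussianPi goeVariance := by
  have hcoe : SNset N α = SNfinset N α := by ext; simp [SNset, SNfinset]
  rw [Emax, ← integral_const_mul]
  refine integral_congr_ae (ae_of_all _ fun ω => ?_)
  simp only [hcoe, ← sup'_eq_csSup_image _ hS]
  rw [apply_sup'_eq_sup'_comp hS (β * ·) fun _ _ => mul_max_of_nonneg _ _ hβ]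
  exact sup'_congr hS rfl fun σ _ => (gaussianField_hamiltonianCoeff ω σ).symm

theorem Egibbs2_eq_integral_gibbsAvg (f : (Fin N → Bool) → (Fin N → Bool) → ℝ) :
    Egibbs2 N α v β f = ∫ ω, gibbsAvg (SNfinset N α) (gaussianField (hamiltonianCoeff α v β) ω)
      (fun σ => gibbsAvg (SNfinset N α) (gaussianField (hamiltonianCoeff α v β) ω) (f σ))
        ∂gaussianPi goeVariance := by
  simp only [gibbsAvg_gibbsAvg, gaussianField_hamiltonianCoeff]
  rfl

theorem log_card_SNfinset_le (hS : (SNfinset N α).Nonempty) :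
    Real.log #(SNfinset N α) ≤ N * Real.log 2 := by
  have hcard : (#(SNfinset N α) : ℝ) ≤ 2 ^ N := by
    exact_mod_cast (card_le_univ (SNfinset N α)).trans_eq (by simp)
  exact (Real.log_le_log (by exact_mod_cast hS.card_pos) hcard).trans_eq (by rw [Real.log_pow])

theorem hamiltonianCoeff_sqrt (hN : N ≠ 0) :
    hamiltonianCoeff α v √(N : ℝ) =
      fun σ : Fin N → Bool => goeCoeff (shiftedSpin (√v * (2 * α - 1)) σ) := by
  ext σ : 1
  rw [hamiltonianCoeff, mul_inv_cancel₀ (by positivity), one_smul]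

theorem gaussianCov_hamiltonianCoeff_self (hN : N ≠ 0) :
    ∀ σ ∈ SNfinset N α, gaussianCov goeVariance (hamiltonianCoeff α v β σ)
      (hamiltonianCoeff α v β σ) = 2 * N * β ^ 2 * Tva α v ^ 2 := fun σ hσ => by
  rw [gaussianCov_hamiltonianCoeff hN, R12_self hN hσ]

theorem integral_gibbsAvg_gaussianCov_hamiltonianCoeff (hN : N ≠ 0) :
    ∫ ω, gibbsAvg (SNfinset N α) (gaussianField (hamiltonianCoeff α v β) ω) (fun σ =>
        gibbsAvg (SNfinset N α) (gaussianField (hamiltonianCoeff α v β) ω) fun s =>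
          gaussianCov goeVariance (hamiltonianCoeff α v β σ) (hamiltonianCoeff α v β s))
        ∂gaussianPi goeVariance =
      2 * N * β ^ 2 * Egibbs2 N α v β fun σ s => R12 α v σ s ^ 2 := by
  simp only [Egibbs2_eq_integral_gibbsAvg, gaussianCov_hamiltonianCoeff hN, gibbsAvg,
    ← integral_const_mul, mul_sum]
  refine integral_congr_ae (ae_of_all _ fun ω => ?_)
  exact sum_congr rfl fun σ _ => sum_congr rfl fun s _ => by ring

theorem mul_sub_Egibbs2_le_Emax (hN : N ≠ 0) (hS : (SNfinset N α).Nonempty) (hβ : 0 < β) :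
    β * (Tva α v ^ 2 - Egibbs2 N α v β fun σ s => R12 α v σ s ^ 2) ≤
      Emax N α (Hv α v) / (2 * N) := by
  have h := sub_integral_gibbsAvg_cov_le_integral_sup' hS
    (gaussianCov_hamiltonianCoeff_self (α := α) (v := v) (β := β) hN)
  rw [integral_gibbsAvg_gaussianCov_hamiltonianCoeff hN, ← mul_Emax_Hv hS hβ.le] at h
  rw [le_div_iff₀ (by positivity)]
  refine le_of_mul_le_mul_left (le_trans (le_of_eq ?_) h) hβ
  ring

theorem Emax_sub_le_mul_sub_Egibbs2 (hN : N ≠ 0) (hS : (SNfinset N α).Nonempty) (hβ : 0 < β) :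
    Emax N α (Hv α v) / (2 * N) - Real.log 2 / (2 * β) ≤
      β * (Tva α v ^ 2 - Egibbs2 N α v β fun σ s => R12 α v σ s ^ 2) := by
  have h := integral_sup'_sub_log_card_le hS
    (gaussianCov_hamiltonianCoeff_self (α := α) (v := v) (β := β) hN)
  rw [integral_gibbsAvg_gaussianCov_hamiltonianCoeff hN, ← mul_Emax_Hv hS hβ.le] at h
  have hcard := log_card_SNfinset_le hS
  rw [div_sub_div _ _ (by positivity) (by positivity), div_le_iff₀ (by positivity)]
  nlinarith

theorem Emax_Hv_le (hN : N ≠ 0) (hS : (SNfinset N α).Nonempty) :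
    Emax N α (Hv α v) ≤ N * (Real.log 2 + Tva α v ^ 2) := by
  have h := integral_sup'_gaussianField_le hS fun σ hσ =>
    (gaussianCov_hamiltonianCoeff_self (α := α) (v := v) (β := 1) hN σ hσ).le
  rw [← mul_Emax_Hv hS zero_le_one] at h
  linarith [log_card_SNfinset_le hS]

theorem mul_sub_Egibbs2_le (hN : N ≠ 0) (hS : (SNfinset N α).Nonempty) (hβ : 0 < β) :
    β * (Tva α v ^ 2 - Egibbs2 N α v β fun σ s => R12 α v σ s ^ 2) ≤
      (Real.log 2 + Tva α v ^ 2) / 2 := by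
  refine (mul_sub_Egibbs2_le_Emax hN hS hβ).trans ?_
  rw [div_le_iff₀ (by positivity)]
  linarith [Emax_Hv_le (v := v) hN hS]

end SpinGlass

section CrossBlock

variable {n r : ℕ}

/-- The coordinates that couple one of the first `n` indices to one of the last `r`. -/
def crossBlock (n r : ℕ) : Set (Fin (n + r) × Fin (n + r)) :=
  {p | (p.1 : ℕ) < n ∧ n ≤ p.2}

theorem sum_indicator_crossBlock (F : Fin (n + r) × Fin (n + r) → ℝ) :
    ∑ p, (crossBlock n r).indicator F p =
      ∑ i : Fin n, ∑ j : Fin r, F (Fin.castAdd r i, Fin.natAdd n j) := by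
  simp [Fintype.sum_prod_type, Fin.sum_univ_add, Set.indicator_apply, crossBlock, Fin.is_lt,
    (Fin.is_lt _).not_ge]

theorem indicator_crossBlock_goeCoeff (x : Fin (n + r) → ℝ) :
    (crossBlock n r).indicator (goeCoeff x) =
      (crossBlock n r).indicator fun p => 2 * (x p.1 * x p.2) := by
  refine Set.indicator_congr fun p hp => ?_
  have hlt : p.1 < p.2 := Fin.lt_def.2 (hp.1.trans_le hp.2)
  simp [goeCoeff, hlt, hlt.ne]

theorem gaussianCov_indicator_crossBlock (u y : Fin (n + r) → ℝ) :
    gaussianCov goeVariance ((crossBlock n r).indicator fun p => 2 * (u p.1 * y p.2))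
        ((crossBlock n r).indicator fun p => 2 * (u p.1 * y p.2)) =
      4 * ((∑ i : Fin n, u (Fin.castAdd r i) ^ 2) * ∑ j : Fin r, y (Fin.natAdd n j) ^ 2) := by
  have hindicator : ∀ p, (goeVariance p : ℝ) *
      (crossBlock n r).indicator (fun p => 2 * (u p.1 * y p.2)) p *
      (crossBlock n r).indicator (fun p => 2 * (u p.1 * y p.2)) p =
      (crossBlock n r).indicator (fun p => 4 * (u p.1 ^ 2 * y p.2 ^ 2)) p := fun p => by
    by_cases hp : p ∈ crossBlock n r
    · have hne : p.1 ≠ p.2 := (Fin.lt_def.2 (hp.1.trans_le hp.2)).ne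
      simp only [Set.indicator_of_mem hp, goeVariance, hne, if_false, NNReal.coe_one]
      ring
    · simp [hp]
  simp only [gaussianCov, hindicator, sum_indicator_crossBlock]
  rw [sum_mul_sum]
  simp only [mul_sum]

theorem indicator_crossBlock_goeCoeff_add_sum {L : Type*} [Fintype L] (y : Fin (n + r) → ℝ)
    (s : L → ℝ) {u : L → Fin (n + r) → ℝ} (hu : ∀ l j, u l (Fin.natAdd n j) = 0) :
    (crossBlock n r).indicator (goeCoeff (y + ∑ l, s l • u l)) =
      ((crossBlock n r).indicator fun p => 2 * (y p.1 * y p.2)) +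
        ∑ l, s l • (crossBlock n r).indicator fun p => 2 * (u l p.1 * y p.2) := by
  rw [indicator_crossBlock_goeCoeff]
  ext p
  by_cases hp : p ∈ crossBlock n r
  · have hzero (l : L) : u l p.2 = 0 := by
      rw [← Fin.natAdd_subNat_cast hp.2, hu]
    simp only [Set.indicator_of_mem hp, Pi.add_apply, Finset.sum_apply, Pi.smul_apply, smul_eq_mul,
      hzero, mul_zero, sum_const_zero, add_zero, add_mul, mul_add, sum_mul, mul_sum]
    congr 1
    exact sum_congr rfl fun l _ => by ring
  · simp [hp]

end CrossBlock

section PairedSpins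

variable {ℓ r : ℕ}

/-- The configuration with spins `ε`, then their opposites, then `t`; flipping the signs `ε`
preserves its total spin. -/
def pairedConfig (ε : Fin ℓ → Bool) (t : Fin r → Bool) : Fin (ℓ + ℓ + r) → Bool :=
  Fin.append (Fin.append ε fun l => !ε l) t

/-- The change of `pairedConfig ε t` in the direction of the spin `ε l`. -/
def pairDirection (r : ℕ) (l : Fin ℓ) : Fin (ℓ + ℓ + r) → ℝ :=
  Fin.append (Fin.append (Pi.single l 1) (Pi.single l (-1))) 0

theorem spin_not (b : Bool) : spin (!b) = -spin b := by
  cases b <;> simp [spin]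

theorem sum_spin_pairedConfig (ε : Fin ℓ → Bool) (t : Fin r → Bool) :
    ∑ i, spin (pairedConfig ε t i) = ∑ j, spin (t j) := by
  simp [pairedConfig, Fin.sum_univ_add, spin_not, -Fin.natAdd_eq_addNat]

theorem spin_pairedConfig (ε : Fin ℓ → Bool) (t : Fin r → Bool) (i : Fin (ℓ + ℓ + r)) :
    spin (pairedConfig ε t i) =
      Fin.append 0 (fun j => spin (t j)) i + ∑ l, spin (ε l) * pairDirection r l i := by
  refine Fin.addCases (fun i => Fin.addCases (fun i => ?_) (fun i => ?_) i) (fun j => ?_) i <;>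
    simp [pairedConfig, pairDirection, spin_not, Pi.single_apply, -Fin.natAdd_eq_addNat]

theorem sum_sq_pairDirection (l : Fin ℓ) :
    ∑ i : Fin (ℓ + ℓ), pairDirection r l (Fin.castAdd r i) ^ 2 = 2 := by
  norm_num [pairDirection, Fin.sum_univ_add, Pi.single_apply, -Fin.natAdd_eq_addNat]

/-- Only the couplings between the paired spins and the tail `t` are used; given these, the
energy is affine in the signs `ε`. -/
theorem mul_sqrt_le_integral_sup'_goeCoeff {S : Finset (Fin (ℓ + ℓ + r) → Bool)} (hS : S.Nonempty)
    (m : ℝ) {t : Fin r → Bool} (ht : ∀ ε : Fin ℓ → Bool, pairedConfig ε t ∈ S) :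
    ℓ * √(16 * (∑ j, (spin (t j) - m) ^ 2) / Real.pi) ≤
      ∫ ω, S.sup' hS (gaussianField (fun σ => goeCoeff (shiftedSpin m σ)) ω)
        ∂gaussianPi goeVariance := by
  set y : Fin (ℓ + ℓ + r) → ℝ := fun i => Fin.append 0 (fun j => spin (t j)) i - m
  have hconfig (ε : Fin ℓ → Bool) :
      shiftedSpin m (pairedConfig ε t) = y + ∑ l, spin (ε l) • pairDirection r l := by
    ext i
    simp only [shiftedSpin, spin_pairedConfig, Pi.add_apply, Finset.sum_apply, Pi.smul_apply,
      smul_eq_mul, y]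
    ring
  have hcov (l : Fin ℓ) := gaussianCov_indicator_crossBlock (pairDirection r l) y
  have hsqrt := sum_sqrt_le_integral_sup'_gaussianField (w := goeVariance)
    (a := fun σ => (crossBlock (ℓ + ℓ) r).indicator (goeCoeff (shiftedSpin m σ))) hS ht fun ε => by
      rw [hconfig, indicator_crossBlock_goeCoeff_add_sum _ _ (by simp [pairDirection])]
  refine (le_of_eq ?_).trans (hsqrt.trans (integral_sup'_indicator_le hS _ _))
  simp only [hcov, sum_sq_pairDirection, sum_const, card_univ, Fintype.card_fin, nsmul_eq_mul, y,
    Fin.append_right]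
  congr 2
  ring

end PairedSpins

section GroundState

variable {N k : ℕ} {α : ℚ} {v β κ : ℝ}

theorem sum_append_const {X : Type*} (f : X → ℝ) (x y : X) (a b : ℕ) :
    ∑ j, f (Fin.append (fun _ : Fin a => x) (fun _ : Fin b => y) j) = a * f x + b * f y := by
  simp [Fin.sum_univ_add]

theorem SNfinset_nonempty (hαN : alphaIntegral α N) (hα : α ≤ 1) : (SNfinset N α).Nonempty := by
  obtain ⟨k, hk⟩ := hαN
  have hkN : k ≤ N := by
    have : (k : ℚ) ≤ N := hk ▸ mul_le_of_le_one_left N.cast_nonneg hα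
    exact_mod_cast this
  obtain ⟨b, rfl⟩ := Nat.exists_eq_add_of_le hkN
  have hk' : (α : ℝ) * (k + b) = k := by exact_mod_cast hk
  refine ⟨Fin.append (fun _ : Fin k => true) (fun _ : Fin b => false),
    mem_filter.2 ⟨mem_univ _, ?_⟩⟩
  rw [sum_append_const]
  simp only [spin, if_true, if_false, Bool.false_eq_true]
  push_cast
  linarith

theorem mul_sqrt_le_sqrt_mul_Emax_Hv {l : ℕ} (hN : N ≠ 0) (hk : α * N = k) (hlk : 2 * l ≤ k)
    (hlN : 2 * l + k ≤ N) :
    l * √(32 * l / Real.pi) ≤ √N * Emax N α (Hv α v) := by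
  obtain ⟨a, rfl⟩ := Nat.exists_eq_add_of_le (show l ≤ k by lia)
  obtain ⟨b, rfl⟩ := Nat.exists_eq_add_of_le (show l + l + a ≤ N by lia)
  rw [add_assoc (l + l)] at hN hk ⊢
  set m : ℝ := √v * (2 * α - 1)
  set t : Fin (a + b) → Bool := Fin.append (fun _ => true) fun _ => false
  have hmem (ε : Fin l → Bool) : pairedConfig ε t ∈ SNfinset (l + l + (a + b)) α := by
    refine mem_filter.2 ⟨mem_univ _, ?_⟩
    have hk' : (α : ℝ) * (l + l + (a + b)) = l + a := by exact_mod_cast hk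
    rw [sum_spin_pairedConfig, sum_append_const]
    simp only [spin, if_true, if_false, Bool.false_eq_true]
    push_cast
    linarith
  have hS : (SNfinset (l + l + (a + b)) α).Nonempty := ⟨_, hmem fun _ => true⟩
  have htail : (2 * l : ℝ) ≤ ∑ j, (spin (t j) - m) ^ 2 := by
    have hla : (l : ℝ) ≤ a := by exact_mod_cast (by lia : l ≤ a)
    have hlb : (l : ℝ) ≤ b := by exact_mod_cast (by lia : l ≤ b)
    rw [sum_append_const fun c => (spin c - m) ^ 2]
    simp only [spin, if_true, if_false, Bool.false_eq_true]
    nlinarith [sq_nonneg (1 - m), sq_nonneg (-1 - m), sq_nonneg m, l.cast_nonneg (α := ℝ)]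
  calc l * √(32 * l / Real.pi)
      ≤ l * √(16 * (∑ j, (spin (t j) - m) ^ 2) / Real.pi) := by
        gcongr l * √(?_ / Real.pi)
        linarith
    _ ≤ _ := mul_sqrt_le_integral_sup'_goeCoeff hS m hmem
    _ = √(l + l + (a + b) : ℕ) * Emax (l + l + (a + b)) α (Hv α v) := by
        rw [mul_Emax_Hv hS (Real.sqrt_nonneg _), hamiltonianCoeff_sqrt hN]

theorem mul_sqrt_mul_le_Emax_Hv (hN : N ≠ 0) (hαN : alphaIntegral α N) (hκα : 4 * κ ≤ α)
    (hκα' : 4 * κ ≤ 1 - α) (hκN : 1 ≤ κ * N) :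
    κ * √(32 * κ / Real.pi) * N ≤ Emax N α (Hv α v) := by
  obtain ⟨k, hk⟩ := hαN
  have hN' : (0 : ℝ) < N := by positivity
  have hκ : 0 < κ := pos_of_mul_pos_left (by linarith) hN'.le
  have hk' : (α : ℝ) * N = k := by exact_mod_cast hk
  have hceil : (⌈κ * N⌉₊ : ℝ) ≤ 2 * κ * N := by
    linarith [Nat.ceil_lt_add_one (show 0 ≤ κ * N by positivity)]
  have hlk : 2 * ⌈κ * N⌉₊ ≤ k := by
    have : 2 * (⌈κ * N⌉₊ : ℝ) ≤ k := by nlinarith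
    exact_mod_cast this
  have hlN : 2 * ⌈κ * N⌉₊ + k ≤ N := by
    have : 2 * (⌈κ * N⌉₊ : ℝ) + k ≤ N := by nlinarith
    exact_mod_cast this
  have hsqrt : √(32 * (κ * N) / Real.pi) = √N * √(32 * κ / Real.pi) := by
    rw [← Real.sqrt_mul hN'.le]
    congr 1
    ring
  refine le_of_mul_le_mul_left ?_ (Real.sqrt_pos.2 hN')
  calc √N * (κ * √(32 * κ / Real.pi) * N)
      = κ * N * √(32 * (κ * N) / Real.pi) := by
        rw [hsqrt]
        ring
    _ ≤ ⌈κ * N⌉₊ * √(32 * ⌈κ * N⌉₊ / Real.pi) := by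
        gcongr <;> exact Nat.le_ceil _
    _ ≤ √N * Emax N α (Hv α v) := mul_sqrt_le_sqrt_mul_Emax_Hv hN hk hlk hlN

theorem sub_le_mul_sub_Egibbs2 (hN : N ≠ 0) (hS : (SNfinset N α).Nonempty)
    (hαN : alphaIntegral α N) (hκα : 4 * κ ≤ α) (hκα' : 4 * κ ≤ 1 - α) (hκN : 1 ≤ κ * N)
    (hβ : 0 < β) :
    κ * √(32 * κ / Real.pi) / 2 - Real.log 2 / (2 * β) ≤
      β * (Tva α v ^ 2 - Egibbs2 N α v β fun σ s => R12 α v σ s ^ 2) := by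
  refine le_trans ?_ (Emax_sub_le_mul_sub_Egibbs2 hN hS hβ)
  gcongr ?_ - _
  rw [div_le_div_iff₀ two_pos (by positivity)]
  linarith [mul_sqrt_mul_le_Emax_Hv (v := v) hN hαN hκα hκα' hκN]

end GroundState

section Liminf

open Filter

theorem le_liminf_liminf {ι κ : Type*} {F : Filter ι} {G : Filter κ} [F.NeBot] [G.NeBot]
    {f : ι → κ → ℝ} {c C : ℝ} (hc : ∀ᶠ i in F, ∀ᶠ j in G, c ≤ f i j)
    (hC : ∀ᶠ i in F, ∀ᶠ j in G, f i j ≤ C) :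
    c ≤ liminf (fun i => liminf (f i) G) F := by
  have hle : ∀ᶠ i in F, liminf (f i) G ≤ C := by
    filter_upwards [hc, hC] with i hci hCi
    exact liminf_le_of_frequently_le hCi.frequently ⟨c, hci⟩
  have hge : ∀ᶠ i in F, c ≤ liminf (f i) G := by
    filter_upwards [hc, hC] with i hci hCi
    exact le_liminf_of_le (IsCoboundedUnder.of_frequently_le hCi.frequently) hci
  exact le_liminf_of_le (IsCoboundedUnder.of_frequently_le hle.frequently) hge

theorem neBot_atTop_inf_alphaIntegral {α : ℚ} (hα : 0 ≤ α) :
    (atTop ⊓ 𝓟 {N | alphaIntegral α N}).NeBot := by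
  rw [inf_principal_neBot_iff]
  intro U hU
  obtain ⟨M, hM⟩ := mem_atTop_sets.1 hU
  refine ⟨α.den * M, hM _ (Nat.le_mul_of_pos_left _ α.den_pos), α.num.toNat * M, ?_⟩
  have hnum : ((α.num.toNat : ℤ) : ℚ) = α.num := by
    rw [Int.toNat_of_nonneg (Rat.num_nonneg.2 hα)]
  push_cast at hnum ⊢
  rw [hnum, ← mul_assoc, Rat.mul_den_eq_num]

end Liminf

theorem eventually_SNfinset_nonempty {α : ℚ} (hα : α ≤ 1) :
    ∀ᶠ N in Filter.atTop ⊓ Filter.principal {N | alphaIntegral α N},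
      N ≠ 0 ∧ alphaIntegral α N ∧ (SNfinset N α).Nonempty := by
  rw [Filter.eventually_inf_principal]
  filter_upwards [Filter.eventually_ne_atTop 0] with N hN hαN
  exact ⟨hN, hαN, SNfinset_nonempty hαN hα⟩

theorem eventually_le_mul_sub_Egibbs2 {α : ℚ} {v κ : ℝ} (hα : α ≤ 1) (hκ : 0 < κ)
    (hκα : 4 * κ ≤ α) (hκα' : 4 * κ ≤ 1 - α) :
    ∀ᶠ β : ℝ in Filter.atTop, ∀ᶠ N in Filter.atTop ⊓ Filter.principal {N | alphaIntegral α N},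
      κ * √(32 * κ / Real.pi) / 4 ≤
        β * (Tva α v ^ 2 - Egibbs2 N α v β fun σ s => R12 α v σ s ^ 2) := by
  set c := κ * √(32 * κ / Real.pi)
  have hc : 0 < c := by positivity
  have hκN : ∀ᶠ N : ℕ in Filter.atTop ⊓ Filter.principal {N | alphaIntegral α N}, 1 ≤ κ * N :=
    ((tendsto_natCast_atTop_atTop.const_mul_atTop hκ).eventually_ge_atTop 1).filter_mono inf_le_left
  filter_upwards [Filter.eventually_gt_atTop 0,
    Filter.eventually_ge_atTop (2 * Real.log 2 / c)] with β hβ hβc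
  have hentropy : Real.log 2 / (2 * β) ≤ c / 4 := by
    rw [div_le_iff₀ hc] at hβc
    rw [div_le_div_iff₀ (by positivity) (by norm_num)]
    linarith
  filter_upwards [eventually_SNfinset_nonempty hα, hκN] with N ⟨hN, hαN, hS⟩ hκN
  linarith [sub_le_mul_sub_Egibbs2 (v := v) hN hS hαN hκα hκα' hκN hβ]

theorem eventually_mul_sub_Egibbs2_le {α : ℚ} {v : ℝ} (hα : α ≤ 1) :
    ∀ᶠ β : ℝ in Filter.atTop, ∀ᶠ N in Filter.atTop ⊓ Filter.principal {N | alphaIntegral α N},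
      β * (Tva α v ^ 2 - Egibbs2 N α v β fun σ s => R12 α v σ s ^ 2) ≤
        (Real.log 2 + Tva α v ^ 2) / 2 := by
  filter_upwards [Filter.eventually_gt_atTop 0] with β hβ
  filter_upwards [eventually_SNfinset_nonempty hα] with N ⟨hN, _, hS⟩
  exact mul_sub_Egibbs2_le hN hS hβ

theorem statement9_general (α : ℚ) (hα0 : 0 < α) (hα1 : α < 1) :
    ∃ C₁ : ℝ, 0 < C₁ ∧ ∀ v : ℝ≥0,
      C₁ < Filter.liminf (fun β : ℝ =>
              Filter.liminf (fun N : ℕ =>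
                  β * (Tva α v ^ 2 - Egibbs2 N α v β (fun σ₁ σ₂ => R12 α v σ₁ σ₂ ^ 2)))
                (Filter.atTop ⊓ Filter.principal {N | alphaIntegral α N}))
            Filter.atTop := by
  have hα1' : 0 < 1 - (α : ℝ) := sub_pos.2 (by exact_mod_cast hα1)
  obtain ⟨κ, hκ, hκα, hκα'⟩ : ∃ κ : ℝ, 0 < κ ∧ 4 * κ ≤ α ∧ 4 * κ ≤ 1 - α :=
    ⟨min (α : ℝ) (1 - α) / 4, by positivity, by linarith [min_le_left (α : ℝ) (1 - α)],
      by linarith [min_le_right (α : ℝ) (1 - α)]⟩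
  set c := κ * √(32 * κ / Real.pi)
  have hc : 0 < c := by positivity
  have := neBot_atTop_inf_alphaIntegral hα0.le
  refine ⟨c / 8, by positivity, fun v => (by linarith : c / 8 < c / 4).trans_le ?_⟩
  exact le_liminf_liminf (eventually_le_mul_sub_Egibbs2 hα1.le hκ hκα hκα')
    (eventually_mul_sub_Egibbs2_le hα1.le)

/-- For every rational `α ∈ (0,1/2)` and every `v ∈ (0,1)` there is a
constant `C₁(v,α) > 0` with
`liminf_{β→∞} liminf_{N→∞} β · E[T(v,α)² − ⟨R₁₂²⟩_v] > C₁(v,α)`,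
where the inner liminf is over integers `N` with `αN` an integer. -/
theorem statement9 (α : ℚ) (hα0 : 0 < α) (hα : α < 1 / 2)
    (v : ℝ) (hv : v ∈ Set.Ioo (0 : ℝ) 1) :
    ∃ C₁ : ℝ, 0 < C₁ ∧
      C₁ < Filter.liminf (fun β : ℝ =>
              Filter.liminf (fun N : ℕ =>
                  β * (Tva α v ^ 2 - Egibbs2 N α v β (fun σ₁ σ₂ => R12 α v σ₁ σ₂ ^ 2)))
                (Filter.atTop ⊓ Filter.principal {N | alphaIntegral α N}))
            Filter.atTop := by
  obtain ⟨C₁, hC₁, h⟩ := statement9_general α hα0 (hα.trans (by norm_num))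
  exact ⟨C₁, hC₁, h ⟨v, hv.1.le⟩⟩
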